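/- Let n be even and let C_n(ℓ;a) be a circulant graph with symmetric edge lengths ℓ_1,…,ℓ_d > 0. Then for every k ∈ ℝ with sin(kℓ_h) ≠ 0 for all h, det M(k) = p_0(k) · p_{n/2}(k) · ∏_{j=1}^{(n/2)−1} p_j(k)². -/

import Mathlib

open Finset

/-- The secular matrix `M(k)` of the quantum circulant graph `C_n(ℓ; a)` with
symmetric edge lengths. -/
noncomputable def Mmat (n d : ℕ) (a : Fin d → ℕ) (ℓ : Fin d → ℝ) (k : ℝ) :
    Matrix (ZMod n) (ZMod n) ℝ :=
  fun i j =>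
    if i = j then -2 * ∑ h : Fin d, Real.cos (k * ℓ h) / Real.sin (k * ℓ h)
    else ∑ h : Fin d,
      if i - j = (a h : ZMod n) ∨ i - j = -(a h : ZMod n)
        then 1 / Real.sin (k * ℓ h) else 0

/-!
`M(k)` is a circulant matrix on `ZMod n`, so the additive characters are eigenvectors and the
determinant is the product of the values of the discrete Fourier transform of its first column.
That column is a sum over the edge families of functions supported on `{0, a_h, -a_h}`, whose
transform at `j` is `p_j(k)`. Since `p_{n-j} = p_j`, the factors pair up apart from `j = 0` and
`j = n / 2`, where `cos (2πja_h/n)` is `1` and `(-1) ^ a_h` and the half-angle formulas apply.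
-/

open Matrix
open scoped ZMod

section CirculantDeterminant

theorem det_eq_prod_of_mulVec_basis_eq_smul {ι m R : Type*} [Fintype ι] [Fintype m]
    [DecidableEq m] [CommRing R] (A : Matrix m m R) (b : Module.Basis ι R (m → R))
    (μ : ι → R) (hb : ∀ i, A *ᵥ b i = μ i • b i) : A.det = ∏ i, μ i := by
  classical
  have hdiag : LinearMap.toMatrix b b (toLin' A) = diagonal μ := by
    ext i j
    rw [LinearMap.toMatrix_apply, toLin'_apply, hb, map_smul, b.repr_self, Finsupp.smul_single,
      smul_eq_mul, mul_one, diagonal_apply, Finsupp.single_apply]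
    grind
  rw [← LinearMap.det_toLin', ← LinearMap.det_toMatrix b, hdiag, det_diagonal]

theorem circulant_mulVec_addChar {G R : Type*} [AddGroup G] [Fintype G] [CommSemiring R]
    (v : G → R) (ψ : AddChar G R) :
    circulant v *ᵥ ψ = (∑ g, ψ (-g) * v g) • ⇑ψ := by
  ext i
  calc ∑ j, v (i - j) * ψ j = ∑ g, v (i - (-g + i)) * ψ (-g + i) :=
        (((Equiv.neg G).trans (Equiv.addRight i)).sum_comp fun j => v (i - j) * ψ j).symm
    _ = ∑ g, ψ (-g) * v g * ψ i := by
        refine sum_congr rfl fun g _ => ?_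
        rw [sub_add_cancel_right, neg_neg, AddChar.map_add_eq_mul]
        ring
    _ = (∑ g, ψ (-g) * v g) * ψ i := (sum_mul ..).symm

theorem det_circulant_eq_prod_addChar {G : Type*} [AddCommGroup G] [Fintype G] [DecidableEq G]
    (v : G → ℂ) : (circulant v).det = ∏ ψ : AddChar G ℂ, ∑ g, ψ (-g) * v g :=
  det_eq_prod_of_mulVec_basis_eq_smul _ (AddChar.complexBasis G) _ fun ψ => by
    rw [AddChar.complexBasis_apply, circulant_mulVec_addChar]

theorem bijective_mulShift_stdAddChar (n : ℕ) [NeZero n] :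
    Function.Bijective (AddChar.mulShift (ZMod.stdAddChar (N := n))) :=
  (Fintype.bijective_iff_injective_and_card _).2
    ⟨AddChar.to_mulShift_inj_of_isPrimitive (ZMod.isPrimitive_stdAddChar n),
      AddChar.card_eq.symm⟩

theorem det_circulant_eq_prod_dft {n : ℕ} [NeZero n] (v : ZMod n → ℂ) :
    (circulant v).det = ∏ j, 𝓕 v j := by
  rw [det_circulant_eq_prod_addChar, ← (bijective_mulShift_stdAddChar n).prod_comp]
  simp only [AddChar.mulShift_apply, ZMod.dft_apply, smul_eq_mul, mul_neg, mul_comm]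

theorem ofReal_det_circulant_eq_prod_dft {n : ℕ} [NeZero n] (v : ZMod n → ℝ) :
    ((circulant v).det : ℂ) = ∏ j, 𝓕 (fun x => (v x : ℂ)) j := by
  rw [← det_circulant_eq_prod_dft, ← Complex.ofRealHom_eq_coe, RingHom.map_det]
  rfl

end CirculantDeterminant

section JumpSymbol

variable {G R S : Type*} [AddGroup G] [DecidableEq G]

/-- The first column of the circulant matrix with diagonal entries `α` and with entries `β` between
vertices differing by `±a`. The two jumps are counted separately, so that `2 * β` appears when
`a = -a ≠ 0`. -/
def jumpSymbol [AddZeroClass R] (a : G) (α β : R) : G → R :=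
  Pi.single 0 α + Pi.single a β + Pi.single (-a) β

theorem jumpSymbol_apply [AddZeroClass R] {a : G} (ha : a ≠ -a) (α β : R) (x : G) :
    jumpSymbol a α β x = if x = 0 then α else if x = a ∨ x = -a then β else 0 := by
  have ha₀ : a ≠ 0 := fun h => ha (by rw [h, neg_zero])
  simp only [jumpSymbol, Pi.add_apply, Pi.single_apply]
  by_cases h₀ : x = 0
  · simp [h₀, ha₀, ha₀.symm]
  by_cases h₁ : x = a
  · simp [h₁, ha, ha₀]
  · simp [h₀, h₁]

theorem map_jumpSymbol [AddZeroClass R] [AddZeroClass S] (f : R →+ S) (a : G) (α β : R) (x : G) :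
    f (jumpSymbol a α β x) = jumpSymbol a (f α) (f β) x := by
  simp only [jumpSymbol, Pi.add_apply, Pi.single_apply, map_add, apply_ite f, map_zero]

end JumpSymbol

theorem dft_single {n : ℕ} [NeZero n] (a : ZMod n) (c : ℂ) (j : ZMod n) :
    𝓕 (Pi.single a c : ZMod n → ℂ) j = ZMod.stdAddChar (-(a * j)) * c := by
  simp [ZMod.dft_apply, Pi.single_apply]

theorem stdAddChar_add_stdAddChar_neg {n : ℕ} [NeZero n] (a : ℕ) (j : ZMod n) :
    ZMod.stdAddChar ((a : ZMod n) * j) + ZMod.stdAddChar (-((a : ZMod n) * j)) =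
      2 * Complex.cos (2 * Real.pi * j.val * a / n) := by
  have hval : (a : ZMod n) * j = ((a * j.val : ℤ) : ZMod n) := by
    push_cast
    rw [ZMod.natCast_zmod_val]
  rw [hval, ← Int.cast_neg, ZMod.stdAddChar_coe, ZMod.stdAddChar_coe, Complex.two_cos]
  push_cast
  congr 2 <;> ring

theorem dft_jumpSymbol {n : ℕ} [NeZero n] (a : ℕ) (α β : ℂ) (j : ZMod n) :
    𝓕 (jumpSymbol (a : ZMod n) α β) j =
      α + 2 * Complex.cos (2 * Real.pi * j.val * a / n) * β := by
  simp only [jumpSymbol, map_add, Pi.add_apply, dft_single, zero_mul, neg_zero,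
    AddChar.map_zero_eq_one, one_mul, neg_mul, neg_neg]
  linear_combination β * stdAddChar_add_stdAddChar_neg a j

theorem tan_half_eq_neg_cot_add_csc {x : ℝ} (hx : Real.sin x ≠ 0) :
    Real.tan (x / 2) = -(Real.cos x / Real.sin x) + 1 / Real.sin x := by
  obtain ⟨y, rfl⟩ : ∃ y, x = 2 * y := ⟨x / 2, by ring⟩
  rw [Real.sin_two_mul] at hx
  have hsin : Real.sin y ≠ 0 := right_ne_zero_of_mul (left_ne_zero_of_mul hx)
  have hcos : Real.cos y ≠ 0 := right_ne_zero_of_mul hx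
  rw [mul_div_cancel_left₀ _ two_ne_zero, Real.tan_eq_sin_div_cos, Real.cos_two_mul,
    Real.sin_two_mul]
  field_simp
  linear_combination 2 * Real.sin_sq_add_cos_sq y

theorem cot_half_eq_cot_add_csc {x : ℝ} (hx : Real.sin x ≠ 0) :
    Real.cos (x / 2) / Real.sin (x / 2) = Real.cos x / Real.sin x + 1 / Real.sin x := by
  obtain ⟨y, rfl⟩ : ∃ y, x = 2 * y := ⟨x / 2, by ring⟩
  rw [Real.sin_two_mul] at hx
  have hsin : Real.sin y ≠ 0 := right_ne_zero_of_mul (left_ne_zero_of_mul hx)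
  have hcos : Real.cos y ≠ 0 := right_ne_zero_of_mul hx
  rw [mul_div_cancel_left₀ _ two_ne_zero, Real.cos_two_mul, Real.sin_two_mul]
  field_simp
  ring

theorem prod_zmod_val_eq_prod_range {M : Type*} [CommMonoid M] (n : ℕ) [NeZero n] (g : ℕ → M) :
    ∏ j : ZMod n, g j.val = ∏ i ∈ range n, g i := by
  cases n with
  | zero => exact absurd rfl (NeZero.ne 0)
  | succ n => exact Fin.prod_univ_eq_prod_range g (n + 1)

theorem prod_range_of_even_of_reflect {M : Type*} [CommMonoid M] {n : ℕ} (hn : Even n)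
    (hn₀ : n ≠ 0) (g : ℕ → M) (hg : ∀ i ∈ Icc 1 (n / 2 - 1), g (n - i) = g i) :
    ∏ i ∈ range n, g i = g 0 * g (n / 2) * ∏ j ∈ Icc 1 (n / 2 - 1), g j ^ 2 := by
  obtain ⟨m, rfl⟩ : ∃ m, n = (m + 1) + (m + 1) := by
    obtain ⟨l, rfl⟩ := hn
    exact ⟨l - 1, by lia⟩
  rw [show (m + 1 + (m + 1)) / 2 = m + 1 by lia, Nat.add_sub_cancel] at hg ⊢
  have upper_half : ∏ i ∈ range m, g (m + 1 + (i + 1)) = ∏ i ∈ range m, g (i + 1) := by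
    rw [← prod_range_reflect]
    refine prod_congr rfl fun i hi => ?_
    have hi' := mem_range.1 hi
    rw [← hg (i + 1) (mem_Icc.2 ⟨by lia, by lia⟩)]
    congr 1
    lia
  have shift : ∏ j ∈ Icc 1 m, g j ^ 2 = ∏ i ∈ range m, g (i + 1) ^ 2 := by
    rw [range_eq_Ico, prod_Ico_add' (fun i => g i ^ 2) 0 m 1]
    rfl
  rw [prod_range_add, prod_range_succ', prod_range_succ', upper_half, shift, prod_pow, add_zero,
    sq]
  ac_rfl

section SecularFactor

/-- The factor `p_j(k)` of the secular determinant, as a function of the phases `θ h = k * ℓ h`.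
The formula is used for every `j : ℕ`, including `j = 0` and `j = n / 2`. -/
noncomputable def secularFactor {ι : Type*} [Fintype ι] (n : ℕ) (a : ι → ℕ) (θ : ι → ℝ)
    (j : ℕ) : ℝ :=
  2 * ∑ h, (-(Real.cos (θ h) / Real.sin (θ h)) +
    Real.cos (2 * Real.pi * j * a h / n) * (1 / Real.sin (θ h)))

variable {ι : Type*} [Fintype ι] {n : ℕ} (a : ι → ℕ) {θ : ι → ℝ}

theorem secularFactor_sub (hn₀ : n ≠ 0) {j : ℕ} (hj : j ≤ n) (θ : ι → ℝ) :
    secularFactor n a θ (n - j) = secularFactor n a θ j := by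
  have hcos : ∀ h, Real.cos (2 * Real.pi * (n - j : ℕ) * a h / n) =
      Real.cos (2 * Real.pi * j * a h / n) := fun h => by
    rw [Nat.cast_sub hj, ← Real.cos_nat_mul_two_pi_sub _ (a h)]
    congr 1
    field_simp
    ring
  simp only [secularFactor, hcos]

theorem secularFactor_zero (hθ : ∀ h, Real.sin (θ h) ≠ 0) :
    secularFactor n a θ 0 = 2 * ∑ h, Real.tan (θ h / 2) := by
  simp [secularFactor, tan_half_eq_neg_cot_add_csc (hθ _)]

theorem cos_two_pi_mul_half_mul_div (hn : Even n) (hn₀ : n ≠ 0) (b : ℕ) :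
    Real.cos (2 * Real.pi * (n / 2 : ℕ) * b / n) = (-1) ^ b := by
  rw [← Real.cos_nat_mul_pi, Nat.cast_div hn.two_dvd two_ne_zero]
  congr 1
  push_cast
  field_simp

theorem secularFactor_half (hn : Even n) (hn₀ : n ≠ 0) (hθ : ∀ h, Real.sin (θ h) ≠ 0) :
    secularFactor n a θ (n / 2) =
      2 * (∑ h with Even (a h), Real.tan (θ h / 2) -
        ∑ h with Odd (a h), Real.cos (θ h / 2) / Real.sin (θ h / 2)) := by
  rw [secularFactor, sum_filter, sum_filter, ← sum_sub_distrib]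
  congr 1
  refine sum_congr rfl fun h _ => ?_
  rw [cos_two_pi_mul_half_mul_div hn hn₀, tan_half_eq_neg_cot_add_csc (hθ h),
    cot_half_eq_cot_add_csc (hθ h)]
  rcases Nat.even_or_odd (a h) with heven | hodd
  · rw [if_pos heven, if_neg (Nat.not_odd_iff_even.2 heven), heven.neg_one_pow]
    ring
  · rw [if_neg (Nat.not_even_iff_odd.2 hodd), if_pos hodd, hodd.neg_one_pow]
    ring

theorem prod_zmod_secularFactor [NeZero n] (hn : Even n) (θ : ι → ℝ) :
    ∏ j : ZMod n, secularFactor n a θ j.val =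
      secularFactor n a θ 0 * secularFactor n a θ (n / 2) *
        ∏ j ∈ Icc 1 (n / 2 - 1), secularFactor n a θ j ^ 2 := by
  have hn₀ := NeZero.ne n
  rw [prod_zmod_val_eq_prod_range]
  refine prod_range_of_even_of_reflect hn hn₀ _ fun i hi => secularFactor_sub a hn₀ ?_ θ
  have := (mem_Icc.1 hi).2
  lia

end SecularFactor

section SecularMatrix

/-- The first column of `M(k)`, as a function of the phases `θ h = k * ℓ h`. -/
noncomputable def secularColumn {ι : Type*} [Fintype ι] (n : ℕ) (a : ι → ℕ) (θ : ι → ℝ) :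
    ZMod n → ℝ :=
  ∑ h, jumpSymbol (a h : ZMod n) (-2 * (Real.cos (θ h) / Real.sin (θ h))) (1 / Real.sin (θ h))

theorem dft_secularColumn {ι : Type*} [Fintype ι] {n : ℕ} [NeZero n] (a : ι → ℕ) (θ : ι → ℝ)
    (j : ZMod n) :
    𝓕 (fun x => (secularColumn n a θ x : ℂ)) j = secularFactor n a θ j.val := by
  have hcast : (fun x => (secularColumn n a θ x : ℂ)) = ∑ h, jumpSymbol (a h : ZMod n)
      ((-2 * (Real.cos (θ h) / Real.sin (θ h)) : ℝ) : ℂ) ((1 / Real.sin (θ h) : ℝ) : ℂ) := by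
    ext x
    rw [secularColumn, Finset.sum_apply, Complex.ofReal_sum, Finset.sum_apply]
    exact sum_congr rfl fun h _ => map_jumpSymbol Complex.ofRealHom.toAddMonoidHom _ _ _ x
  rw [hcast, map_sum, Finset.sum_apply, secularFactor, Complex.ofReal_mul, Complex.ofReal_sum,
    mul_sum]
  refine sum_congr rfl fun h _ => ?_
  rw [dft_jumpSymbol]
  push_cast
  ring

variable {n d : ℕ} {a : Fin d → ℕ}

theorem natCast_ne_neg_of_not_dvd_two_mul {b : ℕ} (hb : ¬ n ∣ 2 * b) :
    (b : ZMod n) ≠ -(b : ZMod n) := by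
  rw [Ne, eq_neg_iff_add_eq_zero, ← two_mul]
  exact_mod_cast (ZMod.natCast_eq_zero_iff _ _).not.2 hb

theorem Mmat_eq_circulant (ha : ∀ h, ¬ n ∣ 2 * a h) (ℓ : Fin d → ℝ) (k : ℝ) :
    Mmat n d a ℓ k = circulant (secularColumn n a fun h => k * ℓ h) := by
  ext i j
  simp only [Mmat, circulant_apply, secularColumn, Finset.sum_apply, sub_eq_zero,
    jumpSymbol_apply (natCast_ne_neg_of_not_dvd_two_mul (ha _)), mul_sum]
  split_ifs <;> rfl

theorem Mmat_det_eq_prod_secularFactor [NeZero n] (ha : ∀ h, ¬ n ∣ 2 * a h) (ℓ : Fin d → ℝ)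
    (k : ℝ) :
    (Mmat n d a ℓ k).det = ∏ j : ZMod n, secularFactor n a (fun h => k * ℓ h) j.val := by
  apply Complex.ofReal_injective
  simp only [Mmat_eq_circulant ha, ofReal_det_circulant_eq_prod_dft, dft_secularColumn,
    Complex.ofReal_prod]

end SecularMatrix

theorem Mmat_det_even_general (n d : ℕ) [NeZero n] (hn : Even n) (a : Fin d → ℕ)
    (ha : ∀ h, ¬ n ∣ 2 * a h) (ℓ : Fin d → ℝ) (k : ℝ) (hk : ∀ h, Real.sin (k * ℓ h) ≠ 0) :
    (Mmat n d a ℓ k).det =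
      (2 * ∑ h : Fin d, Real.tan (k * ℓ h / 2)) *
      (2 * (∑ h ∈ Finset.univ.filter (fun h => Even (a h)), Real.tan (k * ℓ h / 2)
          - ∑ h ∈ Finset.univ.filter (fun h => Odd (a h)),
              Real.cos (k * ℓ h / 2) / Real.sin (k * ℓ h / 2))) *
        ∏ j ∈ Finset.Icc 1 (n / 2 - 1),
          (2 * ∑ h : Fin d,
            (-(Real.cos (k * ℓ h) / Real.sin (k * ℓ h)) +
              Real.cos (2 * Real.pi * j * a h / n) * (1 / Real.sin (k * ℓ h)))) ^ 2 := by
  rw [Mmat_det_eq_prod_secularFactor ha, prod_zmod_secularFactor a hn, secularFactor_zero a hk,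
    secularFactor_half a hn (NeZero.ne n) hk]
  rfl

/-- For even `n`, the secular determinant of the edge-symmetric quantum
circulant graph factorizes as
`det M(k) = p_0(k) p_{n/2}(k) ∏_{j=1}^{n/2-1} p_j(k)²`. -/
theorem Mmat_det_even (n d : ℕ) [NeZero n] (hn : Even n) (a : Fin d → ℕ)
    (hd : 1 ≤ d) (hpos : ∀ h, 0 < a h) (hmono : StrictMono a)
    (hlt : ∀ h, 2 * a h < n)
    (ℓ : Fin d → ℝ) (hℓ : ∀ h, 0 < ℓ h) (k : ℝ)
    (hk : ∀ h, Real.sin (k * ℓ h) ≠ 0) :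
    (Mmat n d a ℓ k).det =
      (2 * ∑ h : Fin d, Real.tan (k * ℓ h / 2)) *
      (2 * (∑ h ∈ Finset.univ.filter (fun h => Even (a h)), Real.tan (k * ℓ h / 2)
          - ∑ h ∈ Finset.univ.filter (fun h => Odd (a h)),
              Real.cos (k * ℓ h / 2) / Real.sin (k * ℓ h / 2))) *
        ∏ j ∈ Finset.Icc 1 (n / 2 - 1),
          (2 * ∑ h : Fin d,
            (-(Real.cos (k * ℓ h) / Real.sin (k * ℓ h)) +
              Real.cos (2 * Real.pi * j * a h / n) * (1 / Real.sin (k * ℓ h)))) ^ 2 := by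
  exact Mmat_det_even_general n d hn a
    (fun h hdvd => (Nat.le_of_dvd (by have := hpos h; lia) hdvd).not_gt (hlt h)) ℓ k hk
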